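/- Let d ≥ 2, p ≥ 1, and let u : ℤ^d → [0,∞) with Σ_x u(x)^p < ∞. Then there exists a Schwarz symmetric v : ℤ^d → [0,∞), equimeasurable with u, such that ‖∇v‖_p = inf{‖∇u′‖_p : u′ : ℤ^d → [0,∞) equimeasurable with u}. -/

import Mathlib

open Filter Topology

noncomputable section

abbrev ZLat (d : ℕ) := Fin d → ℤ

def stdVec (d : ℕ) (i : Fin d) : Fin d → ℝ := fun j => if j = i then 1 else 0

/-- The set of directions E⃗ ⊆ ℝ^d. -/
def Evec (d : ℕ) : Set (Fin d → ℝ) :=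
  {e | (∃ i, e = stdVec d i) ∨
    (∃ i j : Fin d, i < j ∧ e = fun k => (stdVec d i k + stdVec d j k) / 2) ∨
    (∃ i j : Fin d, i < j ∧ e = fun k => (stdVec d i k - stdVec d j k) / 2)}

/-- A fixed enumeration of E⃗ (for d = 2 it is e₁, e₂, (e₁+e₂)/2, (e₁-e₂)/2). -/
def EvecList (d : ℕ) : List (Fin d → ℝ) :=
  ((List.finRange d).map (stdVec d)) ++
  ((List.finRange d).flatMap fun i => (List.finRange d).filterMap fun j =>
    if i < j then some (fun k => (stdVec d i k + stdVec d j k) / 2) else none) ++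
  ((List.finRange d).flatMap fun i => (List.finRange d).filterMap fun j =>
    if i < j then some (fun k => (stdVec d i k - stdVec d j k) / 2) else none)

/-- The n-th largest value of `u`, counted with multiplicity (1-indexed). -/
def nthLargest {α : Type*} (u : α → NNReal) (n : ℕ) : NNReal :=
  sSup {t | ∃ Ω : Finset α, Ω.card = n ∧ ∀ x ∈ Ω, t ≤ u x}

/-- The 1-indexed position of the point with doubled coordinate `m` in the
spiral order 0, 1, −1, 2, −2, … (for even m) resp. 1/2, −1/2, 3/2, −3/2, … (for odd m). -/
def posIdx (m : ℤ) : ℕ := (if 0 < m then m else 1 - m).toNat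

/-- `x` and `y` lie on a common line with direction `e`. -/
def sameLine {d : ℕ} (e : Fin d → ℝ) (x y : ZLat d) : Prop :=
  ∃ c : ℝ, (fun i => (x i : ℝ) - (y i : ℝ)) = c • e

/-- Twice the inner product ⟨e, x⟩, as an integer. -/
def pairing {d : ℕ} (e : Fin d → ℝ) (x : ZLat d) : ℤ :=
  ⌊2 * ∑ i, e i * (x i : ℝ)⌋

/-- One-step rearrangement `R_e`. -/
def stepR {d : ℕ} (e : Fin d → ℝ) (u : ZLat d → NNReal) : ZLat d → NNReal :=
  fun x => nthLargest (fun y : {y : ZLat d // sameLine e x y} => u y.1) (posIdx (pairing e x))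

/-- `R^k u` : k successive one-step rearrangements cycling through the fixed enumeration. -/
def iterR (d : ℕ) (u : ZLat d → NNReal) : ℕ → ZLat d → NNReal
  | 0 => u
  | k + 1 => stepR ((EvecList d).getD (k % (EvecList d).length) 0) (iterR d u k)

/-- The Schwarz rearrangement on ℤ^d : pointwise limit of `R^k u`. -/
def RZd (d : ℕ) (u : ZLat d → NNReal) : ZLat d → NNReal :=
  fun x => limUnder atTop fun k => iterR d u k x

def Admissible {α : Type*} (u : α → NNReal) : Prop :=
  ∀ t : NNReal, 0 < t → {x | t < u x}.Finite

def Equimeasurable {α : Type*} (u v : α → NNReal) : Prop :=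
  ∀ t : NNReal, 0 < t → Nonempty ({x | t < u x} ≃ {x | t < v x})

/-- Graph distance (ℓ¹ distance) on the lattice ℤ^d. -/
def latDist {d : ℕ} (x y : ZLat d) : ℕ := ∑ i, (x i - y i).natAbs

/-- The i-th standard basis vector of ℤ^d. -/
def latE {d : ℕ} (i : Fin d) : ZLat d := fun j => if j = i then 1 else 0

/-- ‖∇u‖_p^p : the p-Sobolev energy, summing over each edge {x, x+e_i} once. -/
def gradEnergy (d : ℕ) (p : ℝ) (u : ZLat d → NNReal) : ENNReal :=
  ∑' (x : ZLat d) (i : Fin d), ENNReal.ofReal (|(u (x + latE i) : ℝ) - (u x : ℝ)| ^ p)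

/-- ‖∇u‖_p. -/
def gradNorm (d : ℕ) (p : ℝ) (u : ZLat d → NNReal) : ENNReal :=
  gradEnergy d p u ^ (1 / p)

/-- Graph automorphism of the lattice graph ℤ^d. -/
def IsLatAuto {d : ℕ} (σ : ZLat d ≃ ZLat d) : Prop :=
  ∀ x y : ZLat d, latDist (σ x) (σ y) = 1 ↔ latDist x y = 1

def Supermodular (G : NNReal → NNReal → NNReal) : Prop :=
  ∀ s t s₀ t₀ : NNReal, G (s + s₀) t + G s (t + t₀) ≤ G (s + s₀) (t + t₀) + G s t

def StrictlySupermodular (G : NNReal → NNReal → NNReal) : Prop :=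
  ∀ s t s₀ t₀ : NNReal, 0 < s₀ → 0 < t₀ →
    G (s + s₀) t + G s (t + t₀) < G (s + s₀) (t + t₀) + G s t

/-- The values of `u` are strictly decreasing: a₁ > a₂ > a₃ > ⋯ . -/
def StrictRan {α : Type*} (u : α → NNReal) : Prop :=
  ∀ n : ℕ, 0 < n → nthLargest u (n + 1) < nthLargest u n

/-!
Fix a point `a` with `1/2 > a₁ > ⋯ > a_d > 0`, which lies on no mirror of the affine reflections
permuting the lattice `ℤ^d`. Along every line parallel to a vector of `E⃗`, the distance to `a` is
increasing in the spiral order of the rearrangement. Polarizing a function in such a mirror, that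
is moving the larger of two mirrored values to the side of `a`, does not increase `‖∇u‖_p`, by
convexity of `|·|^p`. It also strictly decreases a finite, lower semicontinuous penalty unless it
changes nothing. Minimizing the penalty over a compact class of functions of bounded energy thus
makes any competitor polarized in all mirrors at no cost in energy.

A function polarized in all mirrors is decreasing along every line in spiral order, so each `R_e`
fixes it. Moreover its superlevel sets are confined to boxes that depend on `u` only. Among these
functions no mass escapes to infinity, and the lower semicontinuous energy attains its minimum.
-/

open scoped NNReal ENNReal

section NthLargest

variable {α : Type*} {u : α → ℝ≥0}

lemma nthLargest_apply_eq {pos : α → ℕ} (hinj : Function.Injective pos)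
    (hrange : Set.range pos = Set.Ici 1) (hanti : ∀ x y, pos x < pos y → u y ≤ u x) (x : α) :
    nthLargest u (pos x) = u x := by
  classical
  have pos_mem (y : α) : 1 ≤ pos y := hrange.subset ⟨y, rfl⟩
  refine IsGreatest.csSup_eq ⟨?_, ?_⟩
  · refine ⟨(Finset.Icc 1 (pos x)).preimage pos hinj.injOn, ?_, fun y hy => ?_⟩
    · rw [← Finset.card_image_of_injective _ hinj, Finset.image_preimage,
        Finset.filter_true_of_mem fun n hn => ?_, Nat.card_Icc, Nat.add_sub_cancel]
      exact hrange.superset (Finset.mem_Icc.1 hn).1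
    · rcases (Finset.mem_Icc.1 (Finset.mem_preimage.1 hy)).2.lt_or_eq with h | h
      exacts [hanti y x h, (congrArg u (hinj h)).ge]
  · rintro t ⟨Ω, hcard, hΩ⟩
    have hnot : ¬ Ω.image pos ⊆ Finset.Ico 1 (pos x) := fun h => by
      have := Finset.card_le_card h
      rw [Finset.card_image_of_injective _ hinj, Nat.card_Ico] at this
      have := pos_mem x
      omega
    obtain ⟨_, hmem, hlarge⟩ := Finset.not_subset.1 hnot
    obtain ⟨y, hy, rfl⟩ := Finset.mem_image.1 hmem
    have hxy : pos x ≤ pos y :=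
      not_lt.1 fun h => hlarge (Finset.mem_Ico.2 ⟨pos_mem y, h⟩)
    rcases hxy.lt_or_eq with h | h
    exacts [(hΩ y hy).trans (hanti x y h), (hΩ y hy).trans (congrArg u (hinj h)).ge]

lemma natCast_le_encard_of_lt_nthLargest {t : ℝ≥0} {n : ℕ} (h : t < nthLargest u n) :
    (n : ℕ∞) ≤ {x | t < u x}.encard := by
  have hne : {s | ∃ Ω : Finset α, Ω.card = n ∧ ∀ x ∈ Ω, s ≤ u x}.Nonempty := by
    by_contra hempty
    rw [nthLargest, Set.not_nonempty_iff_eq_empty.1 hempty, csSup_empty] at h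
    exact not_lt_bot h
  obtain ⟨s, ⟨Ω, rfl, hΩ⟩, hts⟩ := exists_lt_of_lt_csSup hne h
  rw [← Set.encard_coe_eq_coe_finsetCard]
  exact Set.encard_le_encard fun x hx => hts.trans_le (hΩ x hx)

end NthLargest

section Equimeasurable

variable {α : Type*} {u v w : α → ℝ≥0} {t : ℝ≥0}

lemma Equimeasurable.refl (u : α → ℝ≥0) : Equimeasurable u u := fun _ _ => ⟨Equiv.refl _⟩

lemma Equimeasurable.trans (huv : Equimeasurable u v) (hvw : Equimeasurable v w) :
    Equimeasurable u w := fun t ht => by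
  obtain ⟨e⟩ := huv t ht
  obtain ⟨f⟩ := hvw t ht
  exact ⟨e.trans f⟩

lemma Equimeasurable.comp_equiv (u : α → ℝ≥0) (e : α ≃ α) : Equimeasurable u (u ∘ e) :=
  fun _ _ => ⟨(e.subtypeEquiv fun _ => Iff.rfl).symm⟩

lemma Equimeasurable.encard_eq (h : Equimeasurable u v) (ht : 0 < t) :
    {x | t < u x}.encard = {x | t < v x}.encard :=
  Set.encard_congr (h t ht).some

lemma Admissible.equimeasurable (hu : Admissible u)
    (h : ∀ t, 0 < t → {x | t < u x}.encard = {x | t < v x}.encard) : Equimeasurable u v :=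
  fun t ht => by
    have := (hu t ht).to_subtype
    have hv : {x | t < v x}.Finite := Set.encard_ne_top_iff.1 (h t ht ▸ (hu t ht).encard_lt_top.ne)
    have := hv.to_subtype
    exact ⟨(Finite.card_eq.1 (congrArg ENat.toNat (h t ht))).some⟩

lemma Admissible.of_equimeasurable (hu : Admissible u) (h : Equimeasurable u v) :
    Admissible v := fun t ht =>
  Set.encard_ne_top_iff.1 (h.encard_eq ht ▸ (hu t ht).encard_lt_top.ne)

lemma Admissible.exists_forall_le (hu : Admissible u) : ∃ M, 0 < M ∧ ∀ x, u x ≤ M := by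
  obtain ⟨M, hM⟩ := ((hu 1 one_pos).image u).bddAbove
  refine ⟨max M 1, by positivity, fun x => ?_⟩
  rcases lt_or_ge 1 (u x) with h | h
  exacts [le_max_of_le_left (hM ⟨x, h, rfl⟩), le_max_of_le_right h]

lemma Admissible.exists_lt_superlevel_subset (hu : Admissible u) (ht : 0 < t) :
    ∃ s, t < s ∧ {x | t < u x} ⊆ {x | s < u x} := by
  have hmem : ∀ᶠ s in 𝓝[>] t, ∀ x ∈ {x | t < u x}, s < u x :=
    (Set.Finite.eventually_all (hu t ht)).2 fun x hx => nhdsWithin_le_nhds (Iio_mem_nhds hx)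
  obtain ⟨s, hs, hts⟩ := (hmem.and self_mem_nhdsWithin).exists
  exact ⟨s, hts, hs⟩

end Equimeasurable

section TightClass

variable {α : Type*} {u w : α → ℝ≥0} {B : ℝ≥0 → Set α}

/-- The functions equimeasurable with `u` whose superlevel set at each height `t > 0` is confined
to `B t`. For finite `B t` this is a class of competitors that loses no mass at infinity, hence is
compact for pointwise convergence. -/
def tightClass (u : α → ℝ≥0) (B : ℝ≥0 → Set α) : Set (α → ℝ≥0) :=
  {w | Equimeasurable u w ∧ ∀ t, 0 < t → {x | t < w x} ⊆ B t}

-- Equimeasurability is a system of equalities; splitting it into an upper bound on strict and a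
-- lower bound on weak superlevel sets turns it into closed conditions.
lemma mem_tightClass_iff (hu : Admissible u) :
    w ∈ tightClass u B ↔ ∀ t, 0 < t → {x | t < w x} ⊆ B t ∧
      {x | t < w x}.encard ≤ {x | t < u x}.encard ∧
      {x | t < u x}.encard ≤ (B t ∩ {x | t ≤ w x}).encard := by
  refine ⟨fun ⟨hequi, hB⟩ t ht => ⟨hB t ht, (hequi.encard_eq ht).ge, ?_⟩,
    fun h => ⟨hu.equimeasurable fun t ht => (le_antisymm (h t ht).2.1 ?_).symm,
      fun t ht => (h t ht).1⟩⟩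
  · rw [hequi.encard_eq ht]
    exact Set.encard_le_encard (Set.subset_inter (hB t ht) fun x (hx : t < w x) => hx.le)
  · obtain ⟨s, hts, hs⟩ := hu.exists_lt_superlevel_subset ht
    calc {x | t < u x}.encard ≤ {x | s < u x}.encard := Set.encard_le_encard hs
      _ ≤ (B s ∩ {x | s ≤ w x}).encard := (h s (ht.trans hts)).2.2
      _ ≤ {x | t < w x}.encard := Set.encard_le_encard fun x hx => hts.trans_le hx.2

lemma isClosed_setOf_superlevel_subset (t : ℝ≥0) (s : Set α) :
    IsClosed {w : α → ℝ≥0 | {x | t < w x} ⊆ s} := by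
  have : {w : α → ℝ≥0 | {x | t < w x} ⊆ s} = ⋂ x ∈ sᶜ, {w | w x ≤ t} := by
    ext w
    simp only [Set.mem_iInter, Set.mem_compl_iff]
    exact ⟨fun h x hx => not_lt.1 fun hlt : t < w x => hx (h hlt),
      fun h x (hx : t < w x) => by_contra fun hs => (h x hs).not_gt hx⟩
  rw [this]
  exact isClosed_biInter fun x _ => isClosed_le (continuous_apply x) continuous_const

lemma isClosed_setOf_encard_superlevel_le (t : ℝ≥0) (n : ℕ∞) :
    IsClosed {w : α → ℝ≥0 | {x | t < w x}.encard ≤ n} := by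
  refine isOpen_compl_iff.1 (isOpen_iff_mem_nhds.2 fun w hw => ?_)
  have hlt : n < {x | t < w x}.encard := not_le.1 hw
  obtain ⟨s, hsub, hs⟩ := Set.exists_subset_encard_eq (Order.add_one_le_of_lt hlt)
  have hfin : s.Finite := Set.encard_ne_top_iff.1 (by simpa [hs] using hlt.ne_top)
  have : ∀ᶠ w' in 𝓝 w, ∀ x ∈ s, t < w' x :=
    hfin.eventually_all.2 fun x hx =>
      (continuous_apply x).continuousAt.eventually_const_lt (hsub hx)
  filter_upwards [this] with w' hw'
  refine not_le.2 (lt_of_lt_of_le ?_ (Set.encard_le_encard hw'))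
  exact hs ▸ (ENat.lt_add_one_iff hlt.ne_top).2 le_rfl

lemma isClosed_setOf_le_encard_inter {s : Set α} (hs : s.Finite) (t : ℝ≥0) (n : ℕ∞) :
    IsClosed {w : α → ℝ≥0 | n ≤ (s ∩ {x | t ≤ w x}).encard} := by
  refine isOpen_compl_iff.1 (isOpen_iff_mem_nhds.2 fun w hw => ?_)
  have : ∀ᶠ w' in 𝓝 w, ∀ x ∈ s \ {x | t ≤ w x}, w' x < t :=
    hs.sdiff.eventually_all.2 fun x hx =>
      (continuous_apply x).continuousAt.eventually_lt_const (not_le.1 hx.2)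
  filter_upwards [this] with w' hw'
  have hsub : s ∩ {x | t ≤ w' x} ⊆ s ∩ {x | t ≤ w x} := fun x hx =>
    ⟨hx.1, by_contra fun h => (hw' x ⟨hx.1, h⟩).not_ge hx.2⟩
  exact not_le.2 ((Set.encard_le_encard hsub).trans_lt (not_le.1 hw))

lemma isCompact_tightClass (hu : Admissible u) (hB : ∀ t, 0 < t → (B t).Finite) :
    IsCompact (tightClass u B) := by
  obtain ⟨M, hM, huM⟩ := hu.exists_forall_le
  have hbdd : tightClass u B ⊆ Set.univ.pi fun _ => Set.Icc 0 M := fun w hw x _ => by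
    refine ⟨bot_le, not_lt.1 fun hx => ?_⟩
    have hempty : {y | M < w y}.encard = 0 := by
      rw [← hw.1.encard_eq hM, Set.encard_eq_zero]
      exact Set.eq_empty_of_forall_notMem fun y hy => (huM y).not_gt hy
    exact (Set.encard_eq_zero.1 hempty).subset hx
  refine (isCompact_univ_pi fun _ => isCompact_Icc).of_isClosed_subset ?_ hbdd
  have : tightClass u B = ⋂ t, ⋂ (_ : 0 < t), {w | {x | t < w x} ⊆ B t} ∩
      ({w | {x | t < w x}.encard ≤ {x | t < u x}.encard} ∩
        {w | {x | t < u x}.encard ≤ (B t ∩ {x | t ≤ w x}).encard}) := by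
    ext w
    rw [mem_tightClass_iff hu]
    simp only [Set.mem_iInter]
    rfl
  rw [this]
  exact isClosed_iInter fun t => isClosed_iInter fun ht =>
    (isClosed_setOf_superlevel_subset t (B t)).inter
      ((isClosed_setOf_encard_superlevel_le t _).inter
        (isClosed_setOf_le_encard_inter (hB t ht) t _))

end TightClass

section Convexity

variable {f : ℝ → ℝ} {s : Set ℝ}

lemma add_le_add_of_convexOn_of_mem_Icc (hf : ConvexOn ℝ s f) {x y z w : ℝ} (hx : x ∈ s)
    (hy : y ∈ s) (hz : z ∈ Set.Icc x y) (hsum : z + w = x + y) : f z + f w ≤ f x + f y := by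
  rw [← segment_eq_Icc (hz.1.trans hz.2)] at hz
  obtain ⟨a, b, ha, hb, hab, rfl⟩ := hz
  have hw : w = b • x + a • y := by
    simp only [smul_eq_mul] at hsum ⊢
    linear_combination hsum - (x + y) * hab
  rw [hw]
  calc f (a • x + b • y) + f (b • x + a • y)
      ≤ (a • f x + b • f y) + (b • f x + a • f y) :=
        add_le_add (hf.2 hx hy ha hb hab) (hf.2 hx hy hb ha (by rwa [add_comm]))
    _ = f x + f y := by
        simp only [smul_eq_mul]
        linear_combination (f x + f y) * hab

lemma max_sub_max_add_min_sub_min_le_of_convexOn (hf : ConvexOn ℝ Set.univ f) (a b c e : ℝ) :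
    f (max c e - max a b) + f (min c e - min a b) ≤ f (c - a) + f (e - b) := by
  rcases le_total a b with hab | hba <;> rcases le_total c e with hce | hec
  · simp only [max_eq_right, min_eq_left, hab, hce]
    exact (add_comm _ _).le
  · simp only [max_eq_right, max_eq_left, min_eq_right, min_eq_left, hab, hec]
    rw [add_comm (f (c - a))]
    exact add_le_add_of_convexOn_of_mem_Icc hf trivial trivial ⟨by linarith, by linarith⟩ (by ring)
  · simp only [max_eq_right, max_eq_left, min_eq_right, min_eq_left, hba, hce]
    exact add_le_add_of_convexOn_of_mem_Icc hf trivial trivial ⟨by linarith, by linarith⟩ (by ring)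
  · simp only [max_eq_left, min_eq_right, hba, hec]
    exact le_rfl

lemma convexOn_abs_rpow {p : ℝ} (hp : 1 ≤ p) : ConvexOn ℝ Set.univ fun x : ℝ => |x| ^ p := by
  have himage : norm '' (Set.univ : Set ℝ) = Set.Ici 0 := by rw [Set.image_univ, range_norm]
  refine ConvexOn.comp (g := fun x : ℝ => x ^ p) ?_ (convexOn_norm convex_univ) ?_
  · exact himage ▸ convexOn_rpow hp
  · exact himage ▸ Real.monotoneOn_rpow_Ici_of_exponent_nonneg (zero_le_one.trans hp)

end Convexity

section TsumSymmetrization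

variable {α : Type*} {f g : α → ℝ≥0∞} (e : α ≃ α)

lemma tsum_add_comp_equiv (f : α → ℝ≥0∞) : ∑' x, (f x + f (e x)) = 2 * ∑' x, f x := by
  rw [ENNReal.tsum_add, e.tsum_eq f, two_mul]

lemma tsum_le_tsum_of_add_comp_equiv_le (h : ∀ x, f x + f (e x) ≤ g x + g (e x)) :
    ∑' x, f x ≤ ∑' x, g x := by
  have := ENNReal.tsum_le_tsum h
  rwa [tsum_add_comp_equiv, tsum_add_comp_equiv,
    ENNReal.mul_le_mul_iff_right two_ne_zero ENNReal.ofNat_ne_top] at this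

lemma tsum_lt_tsum_of_add_comp_equiv_lt (hf : ∑' x, f x ≠ ∞)
    (h : ∀ x, f x + f (e x) ≤ g x + g (e x)) {x₀ : α}
    (hx₀ : f x₀ + f (e x₀) < g x₀ + g (e x₀)) : ∑' x, f x < ∑' x, g x := by
  have hne : ∑' x, (f x + f (e x)) ≠ ∞ := by
    rw [tsum_add_comp_equiv]
    exact ENNReal.mul_ne_top ENNReal.ofNat_ne_top hf
  have := ENNReal.tsum_lt_tsum hne h hx₀
  rwa [tsum_add_comp_equiv, tsum_add_comp_equiv,
    ENNReal.mul_lt_mul_iff_right two_ne_zero ENNReal.ofNat_ne_top] at this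

end TsumSymmetrization

section EdgeEnergy

variable {α : Type*} {p : ℝ}

/-- The contribution `|u x - u y| ^ p` of the unordered pair `s(x, y)` to the Sobolev energy. -/
def edgeTerm (p : ℝ) (u : α → ℝ≥0) : Sym2 α → ℝ≥0∞ :=
  Sym2.lift ⟨fun x y => ENNReal.ofReal (|(u x : ℝ) - u y| ^ p),
    fun x y => by simp only [abs_sub_comm]⟩

lemma edgeTerm_mk (u : α → ℝ≥0) (x y : α) :
    edgeTerm p u s(x, y) = ENNReal.ofReal (|(u x : ℝ) - u y| ^ p) := rfl

/-- The `p`-Sobolev energy `‖∇u‖_p^p` of a function on the vertices of a graph. -/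
def edgeEnergy (G : SimpleGraph α) (p : ℝ) (u : α → ℝ≥0) : ℝ≥0∞ :=
  ∑' e : G.edgeSet, edgeTerm p u e

lemma lowerSemicontinuous_edgeEnergy (G : SimpleGraph α) (hp : 0 ≤ p) :
    LowerSemicontinuous (edgeEnergy G p) := by
  refine lowerSemicontinuous_tsum fun e => Continuous.lowerSemicontinuous ?_
  induction e.1 with | _ x y
  exact ENNReal.continuous_ofReal.comp (Continuous.rpow_const (by fun_prop) fun _ => .inr hp)

end EdgeEnergy

section Polarization

variable {α γ : Type*} [LinearOrder γ] {rank : α → γ} {σ : α → α} {u : α → ℝ≥0} {x : α}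

/-- The two-point rearrangement of `u` along an involution `σ`: on each orbit `{x, σ x}` the larger
value is placed at the point of smaller rank. -/
def polarize (rank : α → γ) (σ : α → α) (u : α → ℝ≥0) : α → ℝ≥0 := fun x =>
  if rank x < rank (σ x) then max (u x) (u (σ x)) else min (u x) (u (σ x))

lemma polarize_apply_of_le (hrank : Function.Injective rank) (hx : rank x ≤ rank (σ x)) :
    polarize rank σ u x = max (u x) (u (σ x)) := by
  rcases hx.lt_or_eq with h | h
  · exact if_pos h
  · simp only [polarize, ← hrank h, lt_irrefl, if_false, min_self, max_self]

lemma polarize_apply_image_of_le (hσ : Function.Involutive σ) (hx : rank x ≤ rank (σ x)) :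
    polarize rank σ u (σ x) = min (u x) (u (σ x)) := by
  rw [polarize, hσ x, if_neg hx.not_gt, min_comm]

lemma polarize_eq_or_swap (hrank : Function.Injective rank) (hσ : Function.Involutive σ)
    (u : α → ℝ≥0) (x : α) :
    (polarize rank σ u x = u x ∧ polarize rank σ u (σ x) = u (σ x)) ∨
      (polarize rank σ u x = u (σ x) ∧ polarize rank σ u (σ x) = u x) := by
  have key {y : α} (hy : rank y ≤ rank (σ y)) :
      (polarize rank σ u y = u y ∧ polarize rank σ u (σ y) = u (σ y)) ∨
        (polarize rank σ u y = u (σ y) ∧ polarize rank σ u (σ y) = u y) := by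
    rw [polarize_apply_of_le hrank hy, polarize_apply_image_of_le hσ hy]
    rcases le_total (u y) (u (σ y)) with h | h
    · exact .inr ⟨max_eq_right h, min_eq_left h⟩
    · exact .inl ⟨max_eq_left h, min_eq_right h⟩
  rcases le_total (rank x) (rank (σ x)) with h | h
  · exact key h
  · have := key (y := σ x) (by rwa [hσ x])
    rw [hσ x] at this
    exact this.imp And.symm And.symm

lemma equimeasurable_polarize (hrank : Function.Injective rank) (hσ : Function.Involutive σ)
    (u : α → ℝ≥0) : Equimeasurable u (polarize rank σ u) := by
  classical
  set v := polarize rank σ u with hv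
  let τ : α → α := fun x => if v x = u x then x else σ x
  have hτ : Function.Involutive τ := fun x => by
    rcases polarize_eq_or_swap hrank hσ u x with ⟨h₁, h₂⟩ | ⟨h₁, h₂⟩ <;>
      by_cases h : u x = u (σ x) <;> simp_all [τ, hσ x, eq_comm]
  have huτ : v = u ∘ hτ.toPerm := funext fun x => by
    rcases polarize_eq_or_swap hrank hσ u x with ⟨h, -⟩ | ⟨h, -⟩ <;>
      by_cases hx : v x = u x <;> simp_all [τ]
  exact huτ ▸ Equimeasurable.comp_equiv u hτ.toPerm

lemma superlevel_polarize_subset {t : ℝ≥0} {r : γ} (hu : {x | t < u x} ⊆ {x | rank x ≤ r}) :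
    {x | t < polarize rank σ u x} ⊆ {x | rank x ≤ r} := fun x (hx : t < polarize rank σ u x) => by
  by_cases h : rank x < rank (σ x)
  · rw [polarize, if_pos h] at hx
    rcases lt_max_iff.1 hx with hx | hx
    exacts [hu hx, h.le.trans (hu hx)]
  · rw [polarize, if_neg h] at hx
    exact hu (lt_min_iff.1 hx).1

end Polarization

section Folding

variable {α γ : Type*} [LinearOrder γ] {G : SimpleGraph α} {rank : α → γ} {σ : G ≃g G} {p : ℝ}

/-- An involutive automorphism of a graph that behaves like a reflection in a hyperplane, with the
points moved to larger rank on its positive side: an edge crossing the hyperplane is reversed. -/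
structure IsFolding (G : SimpleGraph α) (rank : α → γ) (σ : G ≃g G) : Prop where
  involutive : Function.Involutive σ
  eq_of_adj_of_crossing : ∀ {x y}, G.Adj x y → rank x < rank (σ x) → rank (σ y) < rank y → y = σ x

lemma edgeTerm_polarize_add_le_of_le (hrank : Function.Injective rank) {σ : α → α}
    (hσ : Function.Involutive σ) (hp : 1 ≤ p) (u : α → ℝ≥0) {x y : α} (hx : rank x ≤ rank (σ x))
    (hy : rank y ≤ rank (σ y)) :
    edgeTerm p (polarize rank σ u) s(x, y) + edgeTerm p (polarize rank σ u) s(σ x, σ y) ≤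
      edgeTerm p u s(x, y) + edgeTerm p u s(σ x, σ y) := by
  have htwo := max_sub_max_add_min_sub_min_le_of_convexOn (convexOn_abs_rpow hp)
    (u y) (u (σ y)) (u x) (u (σ x))
  simp only [edgeTerm_mk, polarize_apply_of_le hrank hx, polarize_apply_of_le hrank hy,
    polarize_apply_image_of_le hσ hx, polarize_apply_image_of_le hσ hy, NNReal.coe_max,
    NNReal.coe_min]
  rw [← ENNReal.ofReal_add (by positivity) (by positivity),
    ← ENNReal.ofReal_add (by positivity) (by positivity)]
  exact ENNReal.ofReal_le_ofReal htwo

lemma edgeTerm_polarize_of_swap (hrank : Function.Injective rank) {σ : α → α}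
    (hσ : Function.Involutive σ) (u : α → ℝ≥0) (x : α) :
    edgeTerm p (polarize rank σ u) s(x, σ x) = edgeTerm p u s(x, σ x) := by
  rcases polarize_eq_or_swap hrank hσ u x with ⟨h₁, h₂⟩ | ⟨h₁, h₂⟩ <;>
    simp only [edgeTerm_mk, h₁, h₂]
  rw [abs_sub_comm]

lemma IsFolding.edgeTerm_polarize_add_le (hσ : IsFolding G rank σ)
    (hrank : Function.Injective rank) (hp : 1 ≤ p) (u : α → ℝ≥0) {x y : α} (hxy : G.Adj x y) :
    edgeTerm p (polarize rank σ u) s(x, y) + edgeTerm p (polarize rank σ u) s(σ x, σ y) ≤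
      edgeTerm p u s(x, y) + edgeTerm p u s(σ x, σ y) := by
  have hinv := hσ.involutive
  have hcross {x y : α} (hxy : G.Adj x y) (hx : rank x < rank (σ x)) (hy : rank (σ y) < rank y) :
      edgeTerm p (polarize rank σ u) s(x, y) + edgeTerm p (polarize rank σ u) s(σ x, σ y) ≤
        edgeTerm p u s(x, y) + edgeTerm p u s(σ x, σ y) := by
    obtain rfl := hσ.eq_of_adj_of_crossing hxy hx hy
    rw [hinv x, Sym2.eq_swap (a := σ x), edgeTerm_polarize_of_swap hrank hinv]
  rcases lt_or_ge (rank x) (rank (σ x)) with hx | hx <;>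
    rcases lt_or_ge (rank y) (rank (σ y)) with hy | hy
  · exact edgeTerm_polarize_add_le_of_le hrank hinv hp u hx.le hy.le
  · rcases hy.lt_or_eq with hy | hy
    exacts [hcross hxy hx hy, edgeTerm_polarize_add_le_of_le hrank hinv hp u hx.le hy.ge]
  · rcases hx.lt_or_eq with hx | hx
    · simpa only [Sym2.eq_swap (a := x), Sym2.eq_swap (a := σ x)] using hcross hxy.symm hy hx
    · exact edgeTerm_polarize_add_le_of_le hrank hinv hp u hx.ge hy.le
  · have := edgeTerm_polarize_add_le_of_le (x := σ x) (y := σ y) hrank hinv hp u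
      (by rwa [hinv x]) (by rwa [hinv y])
    rw [hinv x, hinv y] at this
    rwa [add_comm, add_comm (edgeTerm p u s(x, y))]

lemma IsFolding.edgeEnergy_polarize_le (hσ : IsFolding G rank σ) (hrank : Function.Injective rank)
    (hp : 1 ≤ p) (u : α → ℝ≥0) : edgeEnergy G p (polarize rank σ u) ≤ edgeEnergy G p u := by
  refine tsum_le_tsum_of_add_comp_equiv_le σ.mapEdgeSet fun ⟨e, he⟩ => ?_
  induction e with | _ x y
  exact hσ.edgeTerm_polarize_add_le hrank hp u he

end Folding

section Penalty

variable {α : Type*} {rank : α → ℕ} {σ : α → α} {u : α → ℝ≥0} {x : α}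

/-- The weighted mass `2 ^ (-rank x) / (1 + u x)` at `x`; its sum over `x` is finite and decreases
when larger values of `u` are moved to points of smaller rank. -/
def penaltyTerm (rank : α → ℕ) (u : α → ℝ≥0) (x : α) : ℝ≥0 := (1 / 2) ^ rank x * (1 + u x)⁻¹

/-- A Lyapunov function for polarization: it is finite, lower semicontinuous, and strictly decreased
by every polarization that changes its argument. -/
def penalty (rank : α → ℕ) (u : α → ℝ≥0) : ℝ≥0∞ := ∑' x, (penaltyTerm rank u x : ℝ≥0∞)

lemma penalty_ne_top (hrank : Function.Injective rank) (u : α → ℝ≥0) : penalty rank u ≠ ∞ := by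
  have hweight : Summable fun x => (1 / 2 : ℝ≥0) ^ rank x :=
    NNReal.summable_comp_injective (NNReal.summable_geometric one_half_lt_one) hrank
  refine ENNReal.tsum_coe_ne_top_iff_summable.2 (NNReal.summable_of_le (fun x => ?_) hweight)
  exact mul_le_of_le_one_right' (inv_le_one_of_one_le₀ le_self_add)

lemma lowerSemicontinuous_penalty (rank : α → ℕ) : LowerSemicontinuous (penalty rank) := by
  refine lowerSemicontinuous_tsum fun x => Continuous.lowerSemicontinuous ?_
  refine ENNReal.continuous_coe.comp (continuous_const.mul (Continuous.inv₀ (by fun_prop) ?_))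
  exact fun u => (add_pos_of_pos_of_nonneg one_pos bot_le).ne'

lemma penaltyTerm_polarize_add_lt (hσ : Function.Involutive σ) (hx : rank x < rank (σ x))
    (hu : u x < u (σ x)) :
    penaltyTerm rank (polarize rank σ u) x + penaltyTerm rank (polarize rank σ u) (σ x) <
      penaltyTerm rank u x + penaltyTerm rank u (σ x) := by
  have hpx : polarize rank σ u x = u (σ x) := (if_pos hx).trans (max_eq_right hu.le)
  have hpσ : polarize rank σ u (σ x) = u x :=
    (polarize_apply_image_of_le hσ hx.le).trans (min_eq_left hu.le)
  have hweight : (1 / 2 : ℝ≥0) ^ rank (σ x) < (1 / 2) ^ rank x :=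
    pow_lt_pow_right_of_lt_one₀ (by norm_num) one_half_lt_one hx
  have hinv : (1 + u (σ x))⁻¹ < (1 + u x)⁻¹ := by gcongr
  simp only [penaltyTerm, hpx, hpσ]
  exact mul_add_mul_lt_mul_add_mul' hweight hinv

lemma penaltyTerm_polarize_add_le (hrank : Function.Injective rank) (hσ : Function.Involutive σ)
    (u : α → ℝ≥0) (x : α) :
    penaltyTerm rank (polarize rank σ u) x + penaltyTerm rank (polarize rank σ u) (σ x) ≤
      penaltyTerm rank u x + penaltyTerm rank u (σ x) := by
  have key {y : α} (hy : rank y ≤ rank (σ y)) :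
      penaltyTerm rank (polarize rank σ u) y + penaltyTerm rank (polarize rank σ u) (σ y) ≤
        penaltyTerm rank u y + penaltyTerm rank u (σ y) := by
    rcases lt_or_ge (u y) (u (σ y)) with hu | hu
    · have hne : rank y ≠ rank (σ y) := fun h => hu.ne (congrArg u (hrank h))
      exact (penaltyTerm_polarize_add_lt hσ (hy.lt_of_ne hne) hu).le
    · simp only [penaltyTerm, polarize_apply_of_le hrank hy, polarize_apply_image_of_le hσ hy,
        max_eq_left hu, min_eq_right hu, le_refl]
  rcases le_total (rank x) (rank (σ x)) with h | h
  · exact key h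
  · have := key (y := σ x) (by rwa [hσ x])
    rw [hσ x] at this
    rwa [add_comm, add_comm (penaltyTerm rank u x)]

lemma penalty_polarize_lt (hrank : Function.Injective rank) (hσ : Function.Involutive σ)
    (hx : rank x < rank (σ x)) (hu : u x < u (σ x)) :
    penalty rank (polarize rank σ u) < penalty rank u :=
  tsum_lt_tsum_of_add_comp_equiv_lt hσ.toPerm (penalty_ne_top hrank _)
    (fun y => mod_cast penaltyTerm_polarize_add_le hrank hσ u y)
    (x₀ := x) (mod_cast penaltyTerm_polarize_add_lt hσ hx hu)

end Penalty

section IsPolarized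

variable {α : Type*} {G : SimpleGraph α} {p : ℝ} {w : α → ℝ≥0}

/-- `v` is unchanged by polarization along every folding of `G`. -/
def IsPolarized {γ : Type*} [LinearOrder γ] (G : SimpleGraph α) (rank : α → γ) (v : α → ℝ≥0) :
    Prop :=
  ∀ σ : G ≃g G, IsFolding G rank σ → ∀ x, rank x < rank (σ x) → v (σ x) ≤ v x

theorem exists_isPolarized_edgeEnergy_le (G : SimpleGraph α) {rank : α → ℕ}
    (hrank : Function.Injective rank) (hp : 1 ≤ p) (hw : Admissible w) :
    ∃ v, Equimeasurable w v ∧ IsPolarized G rank v ∧ edgeEnergy G p v ≤ edgeEnergy G p w := by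
  have hbdd (t : ℝ≥0) (ht : 0 < t) : ∃ r, {x | t < w x} ⊆ {x | rank x ≤ r} := by
    obtain ⟨r, hr⟩ := ((hw t ht).image rank).bddAbove
    exact ⟨r, fun x hx => hr ⟨x, hx, rfl⟩⟩
  choose! r hr using hbdd
  set B : ℝ≥0 → Set α := fun t => {x | rank x ≤ r t}
  have hB (t : ℝ≥0) : (B t).Finite := (Set.finite_Iic (r t)).preimage hrank.injOn
  have hK : IsCompact (tightClass w B ∩ {v | edgeEnergy G p v ≤ edgeEnergy G p w}) :=
    (isCompact_tightClass hw fun t _ => hB t).inter_right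
      ((lowerSemicontinuous_edgeEnergy G (zero_le_one.trans hp)).isClosed_preimage _)
  have hne : (tightClass w B ∩ {v | edgeEnergy G p v ≤ edgeEnergy G p w}).Nonempty :=
    ⟨w, ⟨.refl w, hr⟩, le_refl (edgeEnergy G p w)⟩
  obtain ⟨v, ⟨⟨hwv, hvB⟩, hle⟩, hmin⟩ :=
    ((lowerSemicontinuous_penalty rank).lowerSemicontinuousOn _).exists_isMinOn hne hK
  refine ⟨v, hwv, fun σ hσ x hx => not_lt.1 fun hlt => ?_, hle⟩
  have hmem : polarize rank σ v ∈
      tightClass w B ∩ {v | edgeEnergy G p v ≤ edgeEnergy G p w} :=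
    ⟨⟨hwv.trans (equimeasurable_polarize hrank hσ.involutive v),
      fun t ht => superlevel_polarize_subset (hvB t ht)⟩,
      (hσ.edgeEnergy_polarize_le hrank hp v).trans hle⟩
  exact (penalty_polarize_lt hrank hσ.involutive hx hlt).not_ge (hmin hmem)

end IsPolarized

section Rank

lemma exists_injective_rank {α β : Type*} [Countable α] [LinearOrder β] {φ : α → β}
    (hφ : ∀ r, {x | φ x ≤ r}.Finite) :
    ∃ rank : α → ℕ, Function.Injective rank ∧ ∀ x y, φ x < φ y → rank x < rank y := by
  obtain ⟨code, hcode⟩ := exists_injective_nat α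
  let key : α → β ×ₗ ℕ := fun x => toLex (φ x, code x)
  have hkey : Function.Injective key := fun x y h => hcode (congrArg Prod.snd (toLex_inj.1 h))
  have hfin (x : α) : {z | key z < key x}.Finite :=
    (hφ (φ x)).subset fun z (hz : key z < key x) => Prod.Lex.monotone_fst _ _ hz.le
  have hmono (x y : α) (h : key x < key y) :
      {z | key z < key x}.ncard < {z | key z < key y}.ncard :=
    Set.ncard_lt_ncard ⟨fun z hz => lt_trans hz h, fun hsub => lt_irrefl (key x) (hsub h)⟩ (hfin y)
  refine ⟨fun x => {z | key z < key x}.ncard, fun x y hxy => ?_, fun x y hxy =>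
    hmono x y (Prod.Lex.toLex_lt_toLex.2 (.inl hxy))⟩
  by_contra hne
  rcases lt_or_gt_of_ne (hkey.ne hne) with h | h
  exacts [(hmono x y h).ne hxy, (hmono y x h).ne hxy.symm]

end Rank

section Lattice

variable {d : ℕ}

lemma latE_eq_single (i : Fin d) : latE i = Pi.single i 1 := by
  ext j
  simp only [latE, Pi.single_apply]

lemma latE_injective : Function.Injective (latE (d := d)) := fun i j h => by
  simpa [latE] using congrFun h i

lemma latE_add_latE_ne_zero (i j : Fin d) : latE i + latE j ≠ 0 := fun h => by
  have := congrFun h i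
  simp only [latE, Pi.add_apply, Pi.zero_apply, if_true] at this
  split_ifs at this <;> omega

lemma eq_latE_or_neg_of_dotProduct_self_eq_one {z : ZLat d} (hz : z ⬝ᵥ z = 1) :
    ∃ i, z = latE i ∨ z = -latE i := by
  obtain ⟨i, hi⟩ : ∃ i, z i ≠ 0 := by
    by_contra! h
    simp [dotProduct, h] at hz
  have hsplit : z i * z i + ∑ j ∈ Finset.univ.erase i, z j * z j = 1 :=
    (Finset.add_sum_erase _ (fun j => z j * z j) (Finset.mem_univ i)).trans hz
  have hnonneg (j : Fin d) (_ : j ∈ Finset.univ.erase i) : 0 ≤ z j * z j := mul_self_nonneg _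
  have hpos : 0 < z i * z i := mul_self_pos.2 hi
  have hsum : ∑ j ∈ Finset.univ.erase i, z j * z j = 0 := by
    have := Finset.sum_nonneg hnonneg
    omega
  have hoff (j : Fin d) (hj : j ≠ i) : z j = 0 := mul_self_eq_zero.1
    ((Finset.sum_eq_zero_iff_of_nonneg hnonneg).1 hsum j (by simpa using hj))
  refine ⟨i, (mul_self_eq_one_iff.1 (by omega : z i * z i = 1)).imp ?_ ?_⟩ <;>
  · intro hone
    ext j
    by_cases hj : j = i
    · simp [latE, hj, hone]
    · simp [latE, hj, hoff j hj]

/-- The nearest-neighbour graph on `ℤ^d`; for integer vectors, `‖x - y‖₁ = 1` and `‖x - y‖₂ = 1`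
mean the same, and the Euclidean form is visibly invariant under reflections. -/
def latticeGraph (d : ℕ) : SimpleGraph (ZLat d) where
  Adj x y := (x - y) ⬝ᵥ (x - y) = 1
  symm := ⟨fun x y h => by rwa [← neg_sub x y, neg_dotProduct_neg]⟩
  loopless := ⟨fun x h => by simp at h⟩

lemma latticeGraph_adj_add_latE (x : ZLat d) (i : Fin d) :
    (latticeGraph d).Adj (x + latE i) x := by
  simp [latticeGraph, latE_eq_single]

/-- The edge `{x + e_i, x}` of the lattice graph. -/
def latticeEdge (q : ZLat d × Fin d) : (latticeGraph d).edgeSet :=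
  ⟨s(q.1 + latE q.2, q.1), latticeGraph_adj_add_latE q.1 q.2⟩

lemma bijective_latticeEdge : Function.Bijective (latticeEdge (d := d)) := by
  refine ⟨fun ⟨x, i⟩ ⟨y, j⟩ h => ?_, fun ⟨e, he⟩ => ?_⟩
  · have hxy : s(x + latE i, x) = s(y + latE j, y) := Subtype.ext_iff.1 h
    rcases Sym2.eq_iff.1 hxy with ⟨hadd, rfl⟩ | ⟨hx, rfl⟩
    · rw [latE_injective (add_left_cancel hadd)]
    · rw [add_assoc, add_eq_left] at hx
      exact absurd hx (latE_add_latE_ne_zero j i)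
  · induction e with | _ x y
    obtain ⟨i, hi | hi⟩ := eq_latE_or_neg_of_dotProduct_self_eq_one he
    · refine ⟨(y, i), Subtype.ext ?_⟩
      simp only [latticeEdge, ← hi, add_sub_cancel]
    · refine ⟨(x, i), Subtype.ext ?_⟩
      have hy : x + latE i = y := by rw [← neg_eq_iff_eq_neg.2 hi]; abel
      simp only [latticeEdge, hy, Sym2.eq_swap]

lemma gradEnergy_eq_edgeEnergy (p : ℝ) (u : ZLat d → ℝ≥0) :
    gradEnergy d p u = edgeEnergy (latticeGraph d) p u := by
  rw [edgeEnergy, ← (Equiv.ofBijective _ bijective_latticeEdge).tsum_eq]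
  exact ENNReal.tsum_prod.symm

end Lattice

section DistRank

variable {d : ℕ}

/-- The reference point `a = (d, d - 1, …, 1) / (2d + 2)`. As `1/2 > a₁ > ⋯ > a_d > 0`, it lies in
the interior of a chamber of the lattice reflections, so that the distance to it orders every line
of the rearrangement in spiral order. -/
def refPoint (d : ℕ) (i : Fin d) : ℝ := (d - (i : ℕ)) / (2 * d + 2)

/-- The squared Euclidean distance to the reference point. -/
def sqDist (x : ZLat d) : ℝ := ∑ i, (x i - refPoint d i) ^ 2

lemma refPoint_pos (i : Fin d) : 0 < refPoint d i := by
  have : ((i : ℕ) : ℝ) < d := mod_cast i.2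
  exact div_pos (sub_pos.2 this) (by positivity)

lemma refPoint_lt_half (i : Fin d) : refPoint d i < 1 / 2 := by
  rw [refPoint, div_lt_div_iff₀ (by positivity) two_pos]
  linarith [Nat.cast_nonneg (α := ℝ) (i : ℕ)]

lemma refPoint_strictAnti : StrictAnti (refPoint d) := fun i j hij => by
  have : ((i : ℕ) : ℝ) < (j : ℕ) := mod_cast hij
  exact div_lt_div_of_pos_right (by linarith) (by positivity)

lemma finite_setOf_sqDist_le (r : ℝ) : {x : ZLat d | sqDist x ≤ r}.Finite := by
  have hcoord (i : Fin d) : {n : ℤ | |(n : ℝ) - refPoint d i| ≤ √r}.Finite :=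
    (Set.finite_Icc ⌈refPoint d i - √r⌉ ⌊refPoint d i + √r⌋).subset
      fun n (hn : |(n : ℝ) - refPoint d i| ≤ √r) => by
        obtain ⟨hlow, hhigh⟩ := abs_le.1 hn
        exact ⟨Int.ceil_le.2 (by linarith), Int.le_floor.2 (by linarith)⟩
  refine (Set.Finite.pi' hcoord).subset fun x (hx : sqDist x ≤ r) i => Real.abs_le_sqrt ?_
  have hi : (x i - refPoint d i) ^ 2 ≤ sqDist x :=
    Finset.single_le_sum (f := fun i => (x i - refPoint d i) ^ 2) (fun _ _ => sq_nonneg _)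
      (Finset.mem_univ i)
  exact hi.trans hx

/-- A numbering of `ℤ^d` by increasing distance to the reference point. -/
def distRank (d : ℕ) : ZLat d → ℕ :=
  (exists_injective_rank (finite_setOf_sqDist_le (d := d))).choose

lemma distRank_injective : Function.Injective (distRank d) :=
  (exists_injective_rank finite_setOf_sqDist_le).choose_spec.1

lemma distRank_lt_of_sqDist_lt {x y : ZLat d} (h : sqDist x < sqDist y) :
    distRank d x < distRank d y :=
  (exists_injective_rank finite_setOf_sqDist_le).choose_spec.2 x y h

end DistRank

/-- A positive root of `B_d`, that is `e_i` or `e_i ± e_j`, with its coroot as an integer valued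
functional; the axioms are the properties that make the affine reflections `LatticeRoot.reflection`
symmetries of the lattice and place the reference point off their mirrors. -/
structure LatticeRoot (d : ℕ) where
  root : ZLat d
  coroot : ZLat d →+ ℤ
  dotProduct_self_mul_coroot : ∀ x, (root ⬝ᵥ root) * coroot x = 2 * (root ⬝ᵥ x)
  exists_eq_one : ∃ i, root i = 1
  two_mul_sum_refPoint_pos : 0 < 2 * ∑ i, root i * refPoint d i
  two_mul_sum_refPoint_lt : 2 * ∑ i, root i * refPoint d i < (root ⬝ᵥ root : ℤ)

namespace LatticeRoot

variable {d : ℕ} (ρ : LatticeRoot d)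

/-- The direction in `E⃗` of a root: `e_i` for the root `e_i`, and `(e_i ± e_j) / 2` for the root
`e_i ± e_j`. -/
def direction (i : Fin d) : ℝ := ρ.root i / (ρ.root ⬝ᵥ ρ.root : ℤ)

lemma dotProduct_root_self_pos : 0 < ρ.root ⬝ᵥ ρ.root := by
  exact_mod_cast ρ.two_mul_sum_refPoint_pos.trans ρ.two_mul_sum_refPoint_lt

lemma coroot_root : ρ.coroot ρ.root = 2 :=
  mul_left_cancel₀ ρ.dotProduct_root_self_pos.ne' <| by
    rw [ρ.dotProduct_self_mul_coroot, mul_comm]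

lemma coroot_add_zsmul_root (x : ZLat d) (m : ℤ) :
    ρ.coroot (x + m • ρ.root) = ρ.coroot x + 2 * m := by
  rw [map_add, map_zsmul, ρ.coroot_root, smul_eq_mul, mul_comm]

lemma pairing_direction (x : ZLat d) : pairing ρ.direction x = ρ.coroot x := by
  have hpos : (0 : ℝ) < (ρ.root ⬝ᵥ ρ.root : ℤ) := mod_cast ρ.dotProduct_root_self_pos
  have hsum : ∑ i, ρ.direction i * x i = (ρ.root ⬝ᵥ x : ℤ) / (ρ.root ⬝ᵥ ρ.root : ℤ) := by
    simp only [direction, div_mul_eq_mul_div, ← Finset.sum_div, dotProduct]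
    push_cast
    rfl
  have hcoroot : (ρ.root ⬝ᵥ ρ.root : ℤ) * (ρ.coroot x : ℝ) = 2 * (ρ.root ⬝ᵥ x : ℤ) :=
    mod_cast ρ.dotProduct_self_mul_coroot x
  rw [pairing, hsum, ← mul_div_assoc, ← hcoroot, mul_div_cancel_left₀ _ hpos.ne', Int.floor_intCast]

lemma sameLine_direction_iff {x y : ZLat d} :
    sameLine ρ.direction x y ↔ ∃ m : ℤ, y = x + m • ρ.root := by
  have hpos : (0 : ℝ) < (ρ.root ⬝ᵥ ρ.root : ℤ) := mod_cast ρ.dotProduct_root_self_pos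
  constructor
  · rintro ⟨c, hc⟩
    have hline (j : Fin d) : (x j : ℝ) - y j = c / (ρ.root ⬝ᵥ ρ.root : ℤ) * ρ.root j :=
      (congrFun hc j).trans (mul_div_left_comm ..  |>.trans (mul_comm _ _))
    obtain ⟨i, hi⟩ := ρ.exists_eq_one
    refine ⟨y i - x i, funext fun j => ?_⟩
    have hi' := hline i
    rw [hi, Int.cast_one, mul_one] at hi'
    have hj : (x j : ℝ) - y j = (x i - y i) * ρ.root j := hi' ▸ hline j
    have hj' : x j - y j = (x i - y i) * ρ.root j := mod_cast hj
    simp only [Pi.add_apply, Pi.smul_apply, smul_eq_mul]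
    linear_combination -hj'
  · rintro ⟨m, rfl⟩
    refine ⟨-m * (ρ.root ⬝ᵥ ρ.root : ℤ), funext fun j => ?_⟩
    simp only [direction, Pi.add_apply, Pi.smul_apply, smul_eq_mul, Int.cast_add, Int.cast_mul]
    field_simp
    ring

lemma sqDist_add_zsmul_root (x : ZLat d) (m : ℤ) :
    sqDist (x + m • ρ.root) = sqDist x + m * ((ρ.root ⬝ᵥ ρ.root : ℤ) * (ρ.coroot x + m) -
      2 * ∑ i, ρ.root i * refPoint d i) := by
  have hcoroot : (ρ.root ⬝ᵥ ρ.root : ℤ) * (ρ.coroot x : ℝ) = 2 * (ρ.root ⬝ᵥ x : ℤ) :=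
    mod_cast ρ.dotProduct_self_mul_coroot x
  have hexpand : sqDist (x + m • ρ.root) = sqDist x + 2 * m * (ρ.root ⬝ᵥ x : ℤ) +
      m ^ 2 * (ρ.root ⬝ᵥ ρ.root : ℤ) - 2 * m * ∑ i, ρ.root i * refPoint d i := by
    simp only [sqDist, dotProduct, Int.cast_sum, Finset.mul_sum, ← Finset.sum_add_distrib,
      ← Finset.sum_sub_distrib]
    refine Finset.sum_congr rfl fun i _ => ?_
    simp only [Pi.add_apply, Pi.smul_apply, smul_eq_mul, Int.cast_add, Int.cast_mul]
    ring
  rw [hexpand]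
  linear_combination -(m : ℝ) * hcoroot

lemma sqDist_lt_sqDist_add_zsmul_root {x : ZLat d} {m : ℤ}
    (h : 0 < m ∧ 0 < ρ.coroot x + m ∨ m < 0 ∧ ρ.coroot x + m ≤ 0) :
    sqDist x < sqDist (x + m • ρ.root) := by
  have hpos : (0 : ℝ) < (ρ.root ⬝ᵥ ρ.root : ℤ) := mod_cast ρ.dotProduct_root_self_pos
  have hlow := ρ.two_mul_sum_refPoint_pos
  have hhigh := ρ.two_mul_sum_refPoint_lt
  rw [sqDist_add_zsmul_root, lt_add_iff_pos_right]
  rcases h with ⟨hm, hk⟩ | ⟨hm, hk⟩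
  · have hk' : (1 : ℝ) ≤ ρ.coroot x + m := mod_cast hk
    exact mul_pos (mod_cast hm) (by nlinarith)
  · have hk' : (ρ.coroot x + m : ℝ) ≤ 0 := mod_cast hk
    exact mul_pos_of_neg_of_neg (mod_cast hm) (by nlinarith)

lemma involutive_add_sub_coroot_smul_root (k : ℤ) :
    Function.Involutive fun x => x + (k - ρ.coroot x) • ρ.root := fun x => by
  simp only [coroot_add_zsmul_root, add_assoc, ← add_smul]
  simp [show k - ρ.coroot x + (k - (ρ.coroot x + 2 * (k - ρ.coroot x))) = 0 by ring]

lemma dotProduct_sub_coroot_smul_root_self (z : ZLat d) :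
    (z - ρ.coroot z • ρ.root) ⬝ᵥ (z - ρ.coroot z • ρ.root) = z ⬝ᵥ z := by
  simp only [sub_dotProduct, dotProduct_sub, smul_dotProduct, dotProduct_smul, smul_eq_mul,
    dotProduct_comm z ρ.root]
  linear_combination ρ.coroot z * ρ.dotProduct_self_mul_coroot z

/-- The reflection of the lattice graph in the hyperplane `coroot x = k`. -/
def reflection (k : ℤ) : latticeGraph d ≃g latticeGraph d where
  toEquiv := (ρ.involutive_add_sub_coroot_smul_root k).toPerm
  map_rel_iff' {x y} := by
    have hsub : x + (k - ρ.coroot x) • ρ.root - (y + (k - ρ.coroot y) • ρ.root) =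
        (x - y) - ρ.coroot (x - y) • ρ.root := by
      rw [map_sub]
      module
    simp only [latticeGraph, Function.Involutive.coe_toPerm]
    rw [hsub, dotProduct_sub_coroot_smul_root_self]

lemma reflection_apply (k : ℤ) (x : ZLat d) :
    ρ.reflection k x = x + (k - ρ.coroot x) • ρ.root := rfl

lemma reflection_reflection (k : ℤ) (x : ZLat d) : ρ.reflection k (ρ.reflection k x) = x :=
  ρ.involutive_add_sub_coroot_smul_root k x

lemma eq_root_of_two_le_coroot {z : ZLat d} (hz : z ⬝ᵥ z = 1) (h : 2 ≤ ρ.coroot z) :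
    z = ρ.root := by
  have hpos := ρ.dotProduct_root_self_pos
  have hle : (z - ρ.root) ⬝ᵥ (z - ρ.root) ≤ 0 :=
    calc (z - ρ.root) ⬝ᵥ (z - ρ.root) = 1 + (ρ.root ⬝ᵥ ρ.root) * (1 - ρ.coroot z) := by
          simp only [sub_dotProduct, dotProduct_sub, dotProduct_comm z ρ.root, hz]
          linear_combination ρ.dotProduct_self_mul_coroot z
      _ ≤ 0 := by nlinarith
  exact sub_eq_zero.1 (dotProduct_self_eq_zero.1
    (hle.antisymm (Finset.sum_nonneg fun i _ => mul_self_nonneg _)))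

lemma coroot_reflection (k : ℤ) (x : ZLat d) :
    ρ.coroot (ρ.reflection k x) = 2 * k - ρ.coroot x := by
  rw [reflection_apply, coroot_add_zsmul_root]
  ring

lemma distRank_lt_reflection_iff (k : ℤ) (x : ZLat d) :
    distRank d x < distRank d (ρ.reflection k x) ↔
      ρ.coroot x < k ∧ 0 < k ∨ k < ρ.coroot x ∧ k ≤ 0 := by
  have key (y : ZLat d) (h : ρ.coroot y < k ∧ 0 < k ∨ k < ρ.coroot y ∧ k ≤ 0) :
      distRank d y < distRank d (ρ.reflection k y) :=
    distRank_lt_of_sqDist_lt (ρ.sqDist_lt_sqDist_add_zsmul_root (by omega))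
  refine ⟨fun h => ?_, key x⟩
  have hne : ρ.coroot x ≠ k := fun heq => by simp [reflection_apply, heq] at h
  by_contra hnot
  have := key (ρ.reflection k x) (by rw [coroot_reflection]; omega)
  rw [reflection_reflection] at this
  exact this.not_gt h

lemma isFolding_reflection (k : ℤ) :
    IsFolding (latticeGraph d) (distRank d) (ρ.reflection k) where
  involutive := ρ.reflection_reflection k
  eq_of_adj_of_crossing {x y} hadj hx hy := by
    have hy' := (ρ.distRank_lt_reflection_iff k (ρ.reflection k y)).1
      (by rwa [reflection_reflection])
    rw [distRank_lt_reflection_iff] at hx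
    rw [coroot_reflection] at hy'
    rcases lt_or_ge (ρ.coroot x) k with h | h
    · have hroot : y - x = ρ.root :=
        ρ.eq_root_of_two_le_coroot hadj.symm (by rw [map_sub]; omega)
      have hcoroot := congrArg ρ.coroot hroot
      rw [map_sub, coroot_root] at hcoroot
      rw [reflection_apply, show k - ρ.coroot x = 1 by omega, one_smul, ← hroot, add_sub_cancel]
    · have hroot : x - y = ρ.root :=
        ρ.eq_root_of_two_le_coroot hadj (by rw [map_sub]; omega)
      have hcoroot := congrArg ρ.coroot hroot
      rw [map_sub, coroot_root] at hcoroot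
      rw [reflection_apply, show k - ρ.coroot x = -1 by omega, neg_one_smul, ← hroot]
      abel

/-- The short root `e_i`. -/
def short (i : Fin d) : LatticeRoot d where
  root := Pi.single i 1
  coroot := 2 • Pi.evalAddMonoidHom (fun _ => ℤ) i
  dotProduct_self_mul_coroot x := by simp
  exists_eq_one := ⟨i, Pi.single_eq_same i 1⟩
  two_mul_sum_refPoint_pos := by simpa [Pi.single_apply] using refPoint_pos i
  two_mul_sum_refPoint_lt := by
    simp only [Pi.single_apply, Int.cast_ite, Int.cast_one, Int.cast_zero, ite_mul, one_mul,
      zero_mul, Finset.sum_ite_eq', Finset.mem_univ, if_true, dotProduct_single, mul_one]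
    linarith [refPoint_lt_half i]

/-- The long root `e_i + s e_j` with `i < j` and a sign `s`. -/
def long {i j : Fin d} (hij : i < j) (s : ℤˣ) : LatticeRoot d :=
  have hdot : (Pi.single i 1 + Pi.single j (s : ℤ) : ZLat d) ⬝ᵥ
      (Pi.single i 1 + Pi.single j (s : ℤ)) = 2 := by
    simp [hij.ne, hij.ne', ← sq, ← Units.val_pow_eq_pow_val]
  have hsum : ∑ l, ((Pi.single i 1 + Pi.single j (s : ℤ) : ZLat d) l : ℝ) * refPoint d l =
      refPoint d i + (s : ℤ) * refPoint d j := by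
    simp [Pi.single_apply, add_mul, Finset.sum_add_distrib]
  have hanti : refPoint d j < refPoint d i := refPoint_strictAnti hij
  { root := Pi.single i 1 + Pi.single j (s : ℤ)
    coroot := Pi.evalAddMonoidHom (fun _ => ℤ) i + (s : ℤ) • Pi.evalAddMonoidHom (fun _ => ℤ) j
    dotProduct_self_mul_coroot x := by rw [hdot]; simp [add_dotProduct]
    exists_eq_one := ⟨i, by simp [hij.ne]⟩
    two_mul_sum_refPoint_pos := by
      rw [hsum]
      rcases Int.units_eq_one_or s with rfl | rfl <;> push_cast <;>
        linarith [refPoint_pos j]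
    two_mul_sum_refPoint_lt := by
      rw [hsum, hdot]
      rcases Int.units_eq_one_or s with rfl | rfl <;> push_cast <;>
        linarith [refPoint_pos j, refPoint_lt_half i] }

lemma direction_short (i : Fin d) : (short i).direction = stdVec d i := by
  ext k
  simp [direction, short, stdVec, Pi.single_apply]

lemma direction_long {i j : Fin d} (hij : i < j) (s : ℤˣ) :
    (long hij s).direction = fun k => (stdVec d i k + (s : ℤ) * stdVec d j k) / 2 := by
  ext k
  simp [direction, long, stdVec, Pi.single_apply, hij.ne, hij.ne', ← sq,
    ← Units.val_pow_eq_pow_val, one_add_one_eq_two]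

lemma exists_direction_eq_of_mem {e : Fin d → ℝ} (he : e ∈ EvecList d) :
    ∃ ρ : LatticeRoot d, ρ.direction = e := by
  simp only [EvecList, List.mem_append, List.mem_map, List.mem_flatMap, List.mem_filterMap,
    List.mem_finRange, true_and, Option.ite_none_right_eq_some, Option.some.injEq] at he
  obtain (⟨i, rfl⟩ | ⟨i, j, hij, rfl⟩) | ⟨i, j, hij, rfl⟩ := he
  · exact ⟨short i, direction_short i⟩
  · exact ⟨long hij 1, by simp [direction_long]⟩
  · exact ⟨long hij (-1), by simp [direction_long, sub_eq_add_neg]⟩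

end LatticeRoot

section PosIdx

lemma exists_posIdx_add_two_mul_eq (c : ℤ) {n : ℕ} (hn : 1 ≤ n) :
    ∃ m : ℤ, posIdx (c + 2 * m) = n := by
  rcases Int.even_or_odd' (n - c) with ⟨m, h | h⟩
  · exact ⟨m, by rw [posIdx]; split_ifs <;> omega⟩
  · exact ⟨-m - c, by rw [posIdx]; split_ifs <;> omega⟩

lemma eq_zero_of_posIdx_add_two_mul_eq {c m : ℤ} (h : posIdx (c + 2 * m) = posIdx c) : m = 0 := by
  simp only [posIdx] at h
  split_ifs at h <;> omega

lemma one_le_posIdx (c : ℤ) : 1 ≤ posIdx c := by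
  rw [posIdx]
  split_ifs <;> omega

lemma crossing_of_posIdx_lt {c m : ℤ} (h : posIdx c < posIdx (c + 2 * m)) :
    c < c + m ∧ 0 < c + m ∨ c + m < c ∧ c + m ≤ 0 := by
  simp only [posIdx] at h
  split_ifs at h <;> omega

lemma natAbs_le_posIdx_two_mul (c : ℤ) : c.natAbs ≤ posIdx (2 * c) := by
  rw [posIdx]
  split_ifs <;> omega

end PosIdx

section Rearrangement

variable {d : ℕ} {u v : ZLat d → ℝ≥0}

lemma IsPolarized.stepR_direction (hv : IsPolarized (latticeGraph d) (distRank d) v)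
    (ρ : LatticeRoot d) : stepR ρ.direction v = v := funext fun x => by
  let pos (y : {y // sameLine ρ.direction x y}) : ℕ := posIdx (ρ.coroot y)
  have hline (y : {y // sameLine ρ.direction x y}) : ∃ m : ℤ, y = x + m • ρ.root :=
    ρ.sameLine_direction_iff.1 y.2
  have hdiff (y z : {y // sameLine ρ.direction x y}) : ∃ m : ℤ, (z : ZLat d) = y + m • ρ.root := by
    obtain ⟨m, hy⟩ := hline y
    obtain ⟨n, hz⟩ := hline z
    exact ⟨n - m, by rw [hy, hz]; module⟩
  have hinj : Function.Injective pos := fun y z h => by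
    obtain ⟨m, hz⟩ := hdiff z y
    simp only [pos, hz, ρ.coroot_add_zsmul_root] at h
    rw [Subtype.ext_iff, hz, eq_zero_of_posIdx_add_two_mul_eq h, zero_smul, add_zero]
  have hrange : Set.range pos = Set.Ici 1 := by
    refine (Set.range_subset_iff.2 fun _ => one_le_posIdx _).antisymm fun n hn => ?_
    obtain ⟨m, hm⟩ := exists_posIdx_add_two_mul_eq (ρ.coroot x) hn
    exact ⟨⟨x + m • ρ.root, ρ.sameLine_direction_iff.2 ⟨m, rfl⟩⟩,
      by rw [← hm, ← ρ.coroot_add_zsmul_root]⟩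
  have hanti (y z : {y // sameLine ρ.direction x y}) (h : pos y < pos z) : v z ≤ v y := by
    obtain ⟨m, hz⟩ := hdiff y z
    simp only [pos, hz, ρ.coroot_add_zsmul_root] at h
    have hrefl : ρ.reflection (ρ.coroot y + m) y = z := by
      rw [ρ.reflection_apply, add_sub_cancel_left, hz]
    rw [← hrefl]
    exact hv _ (ρ.isFolding_reflection _) y
      ((ρ.distRank_lt_reflection_iff _ _).2 (crossing_of_posIdx_lt h))
  have hx : sameLine ρ.direction x x := ρ.sameLine_direction_iff.2 ⟨0, by simp⟩
  rw [stepR, ρ.pairing_direction]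
  exact nthLargest_apply_eq hinj hrange hanti ⟨x, hx⟩

lemma IsPolarized.RZd_eq (hd : 0 < d) (hv : IsPolarized (latticeGraph d) (distRank d) v) :
    RZd d v = v := by
  have hlength : 0 < (EvecList d).length := by
    simp only [EvecList, List.length_append, List.length_map, List.length_finRange]
    omega
  have hiter (k : ℕ) : iterR d v k = v := by
    induction k with
    | zero => rfl
    | succ k ih =>
      have hlt := Nat.mod_lt k hlength
      obtain ⟨ρ, hρ⟩ := LatticeRoot.exists_direction_eq_of_mem (List.getElem_mem hlt)
      rw [iterR, ih, List.getD_eq_getElem _ _ hlt, ← hρ, hv.stepR_direction]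
  ext x
  simp only [RZd, hiter, tendsto_const_nhds.limUnder_eq]

lemma posIdx_pairing_le_encard {e : Fin d → ℝ} (hv : stepR e v = v) {t : ℝ≥0} {x : ZLat d}
    (hx : t < v x) : (posIdx (pairing e x) : ℕ∞) ≤ {y | t < v y}.encard := by
  rw [← hv] at hx
  calc (posIdx (pairing e x) : ℕ∞) ≤ {y : {y // sameLine e x y} | t < v y}.encard :=
        natCast_le_encard_of_lt_nthLargest hx
    _ = (Subtype.val '' {y : {y // sameLine e x y} | t < v y}).encard :=
        (Subtype.val_injective.encard_image _).symm
    _ ≤ {y | t < v y}.encard := Set.encard_le_encard (Set.image_subset_iff.2 fun _ hy => hy)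

lemma IsPolarized.natAbs_le_encard (hv : IsPolarized (latticeGraph d) (distRank d) v) {t : ℝ≥0}
    {x : ZLat d} (hx : t < v x) (i : Fin d) : ((x i).natAbs : ℕ∞) ≤ {y | t < v y}.encard := by
  have hpairing : pairing (LatticeRoot.short i).direction x = 2 * x i := by
    rw [LatticeRoot.pairing_direction]
    simp [LatticeRoot.short]
  refine le_trans ?_ (posIdx_pairing_le_encard (hv.stepR_direction (.short i)) hx)
  rw [hpairing]
  exact mod_cast natAbs_le_posIdx_two_mul (x i)

end Rearrangement

section Minimization

variable {d : ℕ} {u v : ZLat d → ℝ≥0}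

/-- The box around the origin whose radius is the size of the superlevel set of `u` at height
`t`. -/
def superlevelBox (u : ZLat d → ℝ≥0) (t : ℝ≥0) : Set (ZLat d) :=
  {x | ∀ i, ((x i).natAbs : ℕ∞) ≤ {y | t < u y}.encard}

lemma Admissible.finite_superlevelBox (hu : Admissible u) {t : ℝ≥0} (ht : 0 < t) :
    (superlevelBox u t).Finite := by
  have hcoord (_ : Fin d) : {n : ℤ | (n.natAbs : ℕ∞) ≤ {y | t < u y}.encard}.Finite := by
    rw [← (hu t ht).cast_ncard_eq]
    refine (Set.finite_Icc (-({y | t < u y}.ncard : ℤ)) {y | t < u y}.ncard).subset fun n hn => ?_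
    have hn : n.natAbs ≤ {y | t < u y}.ncard := ENat.natCast_le_natCast.1 hn
    exact Set.mem_Icc.2 (by omega)
  exact Set.Finite.pi' hcoord

lemma IsPolarized.mem_tightClass (hv : IsPolarized (latticeGraph d) (distRank d) v)
    (huv : Equimeasurable u v) : v ∈ tightClass u (superlevelBox u) :=
  ⟨huv, fun _ ht _ hx i => huv.encard_eq ht ▸ hv.natAbs_le_encard hx i⟩

lemma gradNorm_le_gradNorm {p : ℝ} (hp : 0 ≤ p)
    (h : edgeEnergy (latticeGraph d) p u ≤ edgeEnergy (latticeGraph d) p v) :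
    gradNorm d p u ≤ gradNorm d p v := by
  simp only [gradNorm, gradEnergy_eq_edgeEnergy]
  exact ENNReal.rpow_le_rpow h (one_div_nonneg.2 hp)

theorem exists_isPolarized_forall_edgeEnergy_le {p : ℝ} (hp : 1 ≤ p) (hu : Admissible u) :
    ∃ v, Equimeasurable u v ∧ IsPolarized (latticeGraph d) (distRank d) v ∧
      ∀ w, Equimeasurable u w →
        edgeEnergy (latticeGraph d) p v ≤ edgeEnergy (latticeGraph d) p w := by
  have hpolarize (w : ZLat d → ℝ≥0) (hw : Equimeasurable u w) :
      ∃ v, Equimeasurable u v ∧ IsPolarized (latticeGraph d) (distRank d) v ∧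
        edgeEnergy (latticeGraph d) p v ≤ edgeEnergy (latticeGraph d) p w := by
    obtain ⟨v, hwv, hv, hle⟩ := exists_isPolarized_edgeEnergy_le (latticeGraph d)
      distRank_injective hp (hu.of_equimeasurable hw)
    exact ⟨v, hw.trans hwv, hv, hle⟩
  have hnonempty : (tightClass u (superlevelBox u)).Nonempty := by
    obtain ⟨v, huv, hv, -⟩ := hpolarize u (.refl u)
    exact ⟨v, hv.mem_tightClass huv⟩
  obtain ⟨m, hm, hmin⟩ := (lowerSemicontinuous_edgeEnergy (latticeGraph d)
    (zero_le_one.trans hp)).lowerSemicontinuousOn _ |>.exists_isMinOn hnonempty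
      (isCompact_tightClass hu fun _ => hu.finite_superlevelBox)
  obtain ⟨v, huv, hv, hvm⟩ := hpolarize m hm.1
  refine ⟨v, huv, hv, fun w hw => ?_⟩
  obtain ⟨w', huw', hw', hle⟩ := hpolarize w hw
  exact hvm.trans ((hmin (hw'.mem_tightClass huw')).trans hle)

end Minimization

lemma admissible_of_tsum_rpow_lt_top {α : Type*} {p : ℝ} (hp : 0 ≤ p) {u : α → ℝ≥0}
    (hu : ∑' x, (u x : ℝ≥0∞) ^ p < ∞) : Admissible u := fun t ht => by
  have hpos : 0 < (t : ℝ≥0∞) ^ p := ENNReal.rpow_pos (mod_cast ht) ENNReal.coe_ne_top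
  refine (ENNReal.finite_const_le_of_tsum_ne_top hu.ne hpos.ne').subset fun x hx => ?_
  have hx : t < u x := hx
  exact ENNReal.rpow_le_rpow (mod_cast hx.le) hp

theorem stmt18_general (d : ℕ) (hd : 0 < d) (p : ℝ) (hp : 1 ≤ p) (u : ZLat d → ℝ≥0)
    (hu : Admissible u) :
    ∃ v : ZLat d → ℝ≥0, RZd d v = v ∧ Equimeasurable u v ∧
      gradNorm d p v = ⨅ (w : ZLat d → ℝ≥0) (_ : Equimeasurable u w), gradNorm d p w := by
  obtain ⟨v, huv, hv, hmin⟩ := exists_isPolarized_forall_edgeEnergy_le hp hu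
  refine ⟨v, hv.RZd_eq hd, huv, le_antisymm (le_iInf₂ fun w hw => ?_) (iInf₂_le v huv)⟩
  exact gradNorm_le_gradNorm (zero_le_one.trans hp) (hmin w hw)

/-- Existence of a Schwarz symmetric minimizer of the p-Sobolev seminorm among
functions equimeasurable with a given nonnegative ℓ^p function. -/
theorem stmt18 (d : ℕ) (hd : 2 ≤ d) (p : ℝ) (hp : 1 ≤ p) (u : ZLat d → NNReal)
    (hu : (∑' x : ZLat d, (u x : ENNReal) ^ p) < ⊤) :
    ∃ v : ZLat d → NNReal, RZd d v = v ∧ Equimeasurable u v ∧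
      gradNorm d p v =
        ⨅ (w : ZLat d → NNReal) (_ : Equimeasurable u w), gradNorm d p w :=
  stmt18_general d (by omega) p hp u (admissible_of_tsum_rpow_lt_top (by linarith) hu)

end
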